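/- arXiv:2604.27460 — 4 statements merged into one kernel-verified Lean document; each statement's English description precedes it below -/
import Mathlib

section
/- Let n, r, m be positive integers with r < n. Let X₁ ∈ ℝ^{n×r}, X₂ ∈ ℝ^{n×(n−r)}, B̄₂ ∈ ℝ^{(n−r)×m}, and F ∈ ℝ^{m×n}, and assume that I_{n−r} + B̄₂ F X₂ is invertible. Suppose x₁ ∈ ℝ^r and x₂ ∈ ℝ^{n−r} satisfy the algebraic constraint x₂ = −B̄₂ F (X₁ x₁ + X₂ x₂), and set x := X₁ x₁ + X₂ x₂. Then: (i) x₂ = −(I_{n−r} + B̄₂ F X₂)⁻¹ B̄₂ F X₁ x₁; (ii) the matrix I_n + X₂ B̄₂ F is invertible; and (iii) F x = F (I_n + X₂ B̄₂ F)⁻¹ X₁ x₁, i.e., the full-state feedback value F x equals Ω(F) x₁ where Ω(F) := F (I_n + X₂ B̄₂ F)⁻¹ X₁. -/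
open Matrix

section

variable {R ι κ : Type*} [Fintype ι] [Fintype κ] [DecidableEq ι]

theorem isUnit_one_add_mul_comm [CommRing R] [DecidableEq κ] (A : Matrix ι κ R)
    (B : Matrix κ ι R) : IsUnit (1 + A * B) ↔ IsUnit (1 + B * A) := by
  rw [isUnit_iff_isUnit_det, isUnit_iff_isUnit_det, det_one_add_mul_comm]

theorem eq_inv_mulVec_of_mulVec_eq [CommRing R] {A : Matrix ι ι R} (hA : IsUnit A)
    {v w : ι → R} (h : A *ᵥ v = w) : v = A⁻¹ *ᵥ w := by
  have := hA.invertible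
  exact (inv_mulVec_eq_vec h.symm).symm

theorem eq_neg_mulVec_add_iff [Ring R] (K : Matrix ι κ R) (X : Matrix κ ι R)
    (v : κ → R) (y : ι → R) :
    y = -(K *ᵥ (v + X *ᵥ y)) ↔ (1 + K * X) *ᵥ y = -(K *ᵥ v) := by
  rw [mulVec_add, mulVec_mulVec, neg_add, ← sub_eq_add_neg, eq_sub_iff_add_eq, add_mulVec,
    one_mulVec]

theorem one_add_mul_mulVec_add_mulVec [Ring R] {X : Matrix ι κ R} {K : Matrix κ ι R}
    {v : ι → R} {y : κ → R} (hy : y = -(K *ᵥ (v + X *ᵥ y))) :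
    (1 + X * K) *ᵥ (v + X *ᵥ y) = v := by
  have hK : K *ᵥ (v + X *ᵥ y) = -y := (neg_eq_iff_eq_neg.2 hy).symm
  rw [add_mulVec, one_mulVec, ← mulVec_mulVec, hK, mulVec_neg, add_neg_cancel_right]

end

theorem feedback_reduction_general {R n r s m : Type*} [CommRing R]
    [Fintype n] [Fintype r] [Fintype s] [Fintype m] [DecidableEq n] [DecidableEq s]
    (X₁ : Matrix n r R) (X₂ : Matrix n s R) (B₂ : Matrix s m R) (F : Matrix m n R)
    (h : IsUnit (1 + B₂ * F * X₂)) (x₁ : r → R) (x₂ : s → R)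
    (hx₂ : x₂ = -((B₂ * F) *ᵥ (X₁ *ᵥ x₁ + X₂ *ᵥ x₂)))
    (x : n → R) (hx : x = X₁ *ᵥ x₁ + X₂ *ᵥ x₂) :
    x₂ = -(((1 + B₂ * F * X₂)⁻¹ * (B₂ * F) * X₁) *ᵥ x₁) ∧
      IsUnit (1 + X₂ * B₂ * F) ∧
      F *ᵥ x = (F * (1 + X₂ * B₂ * F)⁻¹ * X₁) *ᵥ x₁ := by
  have hunit : IsUnit (1 + X₂ * B₂ * F) := by
    rwa [Matrix.mul_assoc, isUnit_one_add_mul_comm]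
  have hstate : (1 + X₂ * B₂ * F) *ᵥ x = X₁ *ᵥ x₁ := by
    rw [hx, Matrix.mul_assoc, one_add_mul_mulVec_add_mulVec hx₂]
  refine ⟨?_, hunit, ?_⟩
  · calc x₂ = (1 + B₂ * F * X₂)⁻¹ *ᵥ -((B₂ * F) *ᵥ (X₁ *ᵥ x₁)) :=
          eq_inv_mulVec_of_mulVec_eq h ((eq_neg_mulVec_add_iff _ _ _ _).1 hx₂)
      _ = -(((1 + B₂ * F * X₂)⁻¹ * (B₂ * F) * X₁) *ᵥ x₁) := by
          simp only [mulVec_neg, mulVec_mulVec, Matrix.mul_assoc]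
  · calc F *ᵥ x = F *ᵥ ((1 + X₂ * B₂ * F)⁻¹ *ᵥ (X₁ *ᵥ x₁)) :=
          congrArg (F *ᵥ ·) (eq_inv_mulVec_of_mulVec_eq hunit hstate)
      _ = (F * (1 + X₂ * B₂ * F)⁻¹ * X₁) *ᵥ x₁ := by
          simp only [mulVec_mulVec, Matrix.mul_assoc]

/-- Static form of Lemma 1: under the algebraic constraint
`x₂ = −B̄₂ F (X₁ x₁ + X₂ x₂)`, the algebraic part `x₂` is determined by `x₁`,
`I_n + X₂ B̄₂ F` is invertible, and the feedback value `F x` equals `Ω(F) x₁`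
with `Ω(F) = F (I_n + X₂ B̄₂ F)⁻¹ X₁`. -/
theorem feedback_reduction
    (n r m : ℕ) (hn : 0 < n) (hr0 : 0 < r) (hm : 0 < m) (hrn : r < n)
    (X₁ : Matrix (Fin n) (Fin r) ℝ)
    (X₂ : Matrix (Fin n) (Fin (n - r)) ℝ)
    (B₂ : Matrix (Fin (n - r)) (Fin m) ℝ)
    (F : Matrix (Fin m) (Fin n) ℝ)
    (h : IsUnit (1 + B₂ * F * X₂))
    (x₁ : Fin r → ℝ) (x₂ : Fin (n - r) → ℝ)
    (hx₂ : x₂ = -(B₂ * F).mulVec (X₁.mulVec x₁ + X₂.mulVec x₂))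
    (x : Fin n → ℝ) (hx : x = X₁.mulVec x₁ + X₂.mulVec x₂) :
    x₂ = -((1 + B₂ * F * X₂)⁻¹ * (B₂ * F) * X₁).mulVec x₁ ∧
      IsUnit (1 + X₂ * B₂ * F) ∧
      F.mulVec x = (F * (1 + X₂ * B₂ * F)⁻¹ * X₁).mulVec x₁ :=
  feedback_reduction_general X₁ X₂ B₂ F h x₁ x₂ hx₂ x hx
end

section
/- Let n, r, m be positive integers with r < n. Let J ∈ ℝ^{r×r}, X₁ ∈ ℝ^{n×r}, X₂ ∈ ℝ^{n×(n−r)}, B̄₁ ∈ ℝ^{r×m}, B̄₂ ∈ ℝ^{(n−r)×m}, and F ∈ ℝ^{m×n}, and assume that I_{n−r} + B̄₂ F X₂ is invertible. Then for every λ ∈ ℝ, the determinant of the n×n block matrix with blocks [λI_r − (J + B̄₁ F X₁), −B̄₁ F X₂; −B̄₂ F X₁, −(I_{n−r} + B̄₂ F X₂)] equals (−1)^{n−r} · det(I_{n−r} + B̄₂ F X₂) · det(λI_r − (J + B̄₁ F (I_n + X₂ B̄₂ F)⁻¹ X₁)). -/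
open Matrix

/-!
Schur's formula at the lower right block leaves the complement
`M - (K₁ X₁ - K₁ X₂ (1 + K₂ X₂)⁻¹ K₂ X₁)`, where `M = λI - J` and `Kᵢ = Bᵢ F`. The Woodbury identity
`(1 + X₂ K₂)⁻¹ = 1 - X₂ (1 + K₂ X₂)⁻¹ K₂` recognises the bracket as `K₁ (1 + X₂ K₂)⁻¹ X₁`.
-/

section CommRing

variable {R l k n : Type*} [CommRing R]
  [Fintype l] [DecidableEq l] [Fintype k] [DecidableEq k]

theorem det_fromBlocks_neg₂₂ (A : Matrix l l R) (B : Matrix l k R) (C : Matrix k l R)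
    {D : Matrix k k R} (hD : IsUnit D) :
    (fromBlocks A B C (-D)).det =
      (-1) ^ Fintype.card k * D.det * (A + B * D⁻¹ * C).det := by
  let := hD.invertible
  let : Invertible (-D) := invertibleNeg D
  rw [det_fromBlocks₂₂, det_neg, invOf_neg, invOf_eq_nonsing_inv, Matrix.mul_neg, Matrix.neg_mul,
    sub_neg_eq_add]

variable [Fintype n] [DecidableEq n]

theorem inv_one_add_mul_eq_sub {U : Matrix n k R} {V : Matrix k n R} (h : IsUnit (1 + V * U)) :
    (1 + U * V)⁻¹ = 1 - U * (1 + V * U)⁻¹ * V := by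
  simpa using add_mul_mul_inv_eq_sub 1 U 1 V isUnit_one isUnit_one (by simpa using h)

theorem det_block_closed_loop_pencil_general (M : Matrix l l R) (K₁ : Matrix l n R)
    (K₂ : Matrix k n R) (X₁ : Matrix n l R) (X₂ : Matrix n k R) (h : IsUnit (1 + K₂ * X₂)) :
    (fromBlocks (M - K₁ * X₁) (-(K₁ * X₂)) (-(K₂ * X₁)) (-(1 + K₂ * X₂))).det =
      (-1) ^ Fintype.card k * (1 + K₂ * X₂).det * (M - K₁ * (1 + X₂ * K₂)⁻¹ * X₁).det := by
  have schur_complement_eq :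
      M - K₁ * X₁ + -(K₁ * X₂) * (1 + K₂ * X₂)⁻¹ * -(K₂ * X₁) =
        M - K₁ * (1 + X₂ * K₂)⁻¹ * X₁ := by
    rw [inv_one_add_mul_eq_sub h]
    simp only [Matrix.mul_sub, Matrix.sub_mul, Matrix.mul_one, Matrix.mul_assoc, Matrix.neg_mul,
      Matrix.mul_neg, neg_neg]
    abel
  rw [det_fromBlocks_neg₂₂ _ _ _ h, schur_complement_eq]

end CommRing

/-- Determinant of the transformed closed-loop pencil via Schur's determinant formula:
`det [λI − (J + B̄₁FX₁), −B̄₁FX₂; −B̄₂FX₁, −(I + B̄₂FX₂)]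
  = (−1)^{n−r} det(I + B̄₂FX₂) det(λI − (J + B̄₁ Ω(F)))`. -/
theorem det_block_closed_loop_pencil
    (n r m : ℕ) (hn : 0 < n) (hr0 : 0 < r) (hm : 0 < m) (hrn : r < n)
    (J : Matrix (Fin r) (Fin r) ℝ)
    (X₁ : Matrix (Fin n) (Fin r) ℝ)
    (X₂ : Matrix (Fin n) (Fin (n - r)) ℝ)
    (B₁ : Matrix (Fin r) (Fin m) ℝ)
    (B₂ : Matrix (Fin (n - r)) (Fin m) ℝ)
    (F : Matrix (Fin m) (Fin n) ℝ)
    (h : IsUnit (1 + B₂ * F * X₂)) :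
    ∀ lam : ℝ,
      (Matrix.fromBlocks
          (lam • (1 : Matrix (Fin r) (Fin r) ℝ) - (J + B₁ * F * X₁))
          (-(B₁ * F * X₂))
          (-(B₂ * F * X₁))
          (-(1 + B₂ * F * X₂))).det
        = (-1 : ℝ) ^ (n - r) * (1 + B₂ * F * X₂).det *
            (lam • (1 : Matrix (Fin r) (Fin r) ℝ)
              - (J + B₁ * F * (1 + X₂ * B₂ * F)⁻¹ * X₁)).det := by
  intro lam
  simpa only [sub_add_eq_sub_sub, ← Matrix.mul_assoc, Fintype.card_fin] using
    det_block_closed_loop_pencil_general (lam • 1 - J) (B₁ * F) (B₂ * F) X₁ X₂ h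
end

section
/- Let n, r, m be positive integers with r < n. Let E, A ∈ ℝ^{n×n}, B ∈ ℝ^{n×m}, F ∈ ℝ^{m×n}, and let Y, X ∈ ℝ^{n×n} be invertible matrices such that Yᵀ E X is the block matrix [I_r, 0; 0, 0] and Yᵀ A X is the block matrix [J, 0; 0, I_{n−r}] for some J ∈ ℝ^{r×r}. Write X = [X₁ X₂] with X₁ ∈ ℝ^{n×r} and X₂ ∈ ℝ^{n×(n−r)}, and set B̄₁ := [I_r 0] Yᵀ B ∈ ℝ^{r×m} and B̄₂ := [0 I_{n−r}] Yᵀ B ∈ ℝ^{(n−r)×m}. Assume I_{n−r} + B̄₂ F X₂ is invertible. Then for every λ ∈ ℂ, det(λE − (A + BF)) = 0 (with the real matrix λE − (A+BF) interpreted entrywise in ℂ) if and only if λ is an eigenvalue of the complexification of J + B̄₁ F (I_n + X₂ B̄₂ F)⁻¹ X₁. In particular, the polynomial λ ↦ det(λE − (A+BF)) is not identically zero, i.e., the closed-loop pencil (E, A+BF) is regular. -/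
open Matrix

/-- Identification of `Fin r ⊕ Fin (n − r)` with `Fin n` (for `r ≤ n`), used to express
block matrices in Kronecker canonical form as `n × n` matrices. -/
def kcfEquiv (n r : ℕ) (h : r ≤ n) : Fin r ⊕ Fin (n - r) ≃ Fin n :=
  finSumFinEquiv.trans (finCongr (Nat.add_sub_cancel' h))

/-!
In the coordinates given by `Yᵀ` and `X` the closed-loop pencil is `λ [I, 0; 0, 0] - [a, b; c, d]`
with `d = I + B̄₂ F X₂`. Since `d` is invertible, the Schur complement formula factors its
determinant as `det (-d) * det (λ I - (a - b d⁻¹ c))`, and the Woodbury identity for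
`(I + X₂ B̄₂ F)⁻¹` identifies `a - b d⁻¹ c` with `J + B̄₁ Ω(F)`. The pencil determinant is therefore
a unit multiple of a characteristic polynomial.
-/

section SquareMatrix

variable {R S n : Type*} [CommRing R] [CommRing S] [Fintype n] [DecidableEq n]

lemma isUnit_det_map (f : R →+* S) {M : Matrix n n R} (hM : IsUnit M.det) :
    IsUnit (M.map f).det := by
  rw [← RingHom.mapMatrix_apply, ← RingHom.map_det]
  exact hM.map f

lemma map_inv_of_isUnit (f : R →+* S) {M : Matrix n n R} (hM : IsUnit M) :
    M⁻¹.map f = (M.map f)⁻¹ := by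
  refine (inv_eq_right_inv ?_).symm
  rw [← Matrix.map_mul, mul_nonsing_inv M ((isUnit_iff_isUnit_det M).mp hM),
    Matrix.map_one f f.map_zero f.map_one]

lemma associated_det_mul_mul {P Q : Matrix n n R} (hP : IsUnit P.det) (hQ : IsUnit Q.det)
    (M : Matrix n n R) : Associated (P * M * Q).det M.det := by
  rw [det_mul, det_mul]
  exact (associated_mul_unit_left _ _ hQ).trans (associated_unit_mul_left _ _ hP)

lemma exists_det_smul_one_sub_ne_zero [IsDomain R] [Infinite R] (M : Matrix n n R) :
    ∃ μ : R, (μ • (1 : Matrix n n R) - M).det ≠ 0 := by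
  by_contra! hdet
  refine M.charpoly_monic.ne_zero (Polynomial.funext fun μ => ?_)
  rw [eval_charpoly, Polynomial.eval_zero, ← hdet μ, smul_one_eq_diagonal, scalar_apply]

end SquareMatrix

section RectangularMatrix

variable {R S l m n p ι κ ι' κ' : Type*}

lemma map_mul_pencil_mul_map [Semiring R] [CommRing S] [Fintype m] [Fintype n] (f : R →+* S)
    (P : Matrix l m R) (E M : Matrix m n R) (Q : Matrix n p R) (μ : S) :
    P.map f * (μ • E.map f - M.map f) * Q.map f
      = μ • (P * E * Q).map f - (P * M * Q).map f := by
  simp only [Matrix.map_mul, Matrix.mul_sub, Matrix.sub_mul, Matrix.mul_smul, Matrix.smul_mul]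

lemma mul_mul_eq_reindex_fromBlocks [NonUnitalSemiring R] [Fintype m] [Fintype n]
    (e : ι ⊕ κ ≃ l) (e' : ι' ⊕ κ' ≃ p) (G : Matrix l m R) (F : Matrix m n R) (X : Matrix n p R) :
    G * F * X = reindex e e' (fromBlocks
      (G.submatrix (e ∘ Sum.inl) id * F * X.submatrix id (e' ∘ Sum.inl))
      (G.submatrix (e ∘ Sum.inl) id * F * X.submatrix id (e' ∘ Sum.inr))
      (G.submatrix (e ∘ Sum.inr) id * F * X.submatrix id (e' ∘ Sum.inl))
      (G.submatrix (e ∘ Sum.inr) id * F * X.submatrix id (e' ∘ Sum.inr))) := by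
  rw [← Equiv.symm_apply_eq]
  ext (i | i) (j | j) <;> simp [Matrix.mul_apply]

variable [CommRing R] [Fintype m] [Fintype n] [DecidableEq n] [Fintype κ] [DecidableEq κ]

lemma inv_one_add_mul_of_isUnit (U : Matrix n κ R) (V : Matrix κ n R) (h : IsUnit (1 + V * U)) :
    (1 + U * V)⁻¹ = 1 - U * (1 + V * U)⁻¹ * V := by
  simpa using add_mul_mul_inv_eq_sub 1 U 1 V isUnit_one isUnit_one (by simpa using h)

lemma reduced_closedLoop_eq_schurComplement (F : Matrix m n R) (J : Matrix ι ι R)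
    (X₁ : Matrix n ι R) (X₂ : Matrix n κ R) (B₁ : Matrix ι m R) (B₂ : Matrix κ m R)
    (h : IsUnit (1 + B₂ * F * X₂)) :
    J + B₁ * F * (1 + X₂ * B₂ * F)⁻¹ * X₁
      = J + B₁ * F * X₁ - B₁ * F * X₂ * (1 + B₂ * F * X₂)⁻¹ * (B₂ * F * X₁) := by
  rw [Matrix.mul_assoc X₂, inv_one_add_mul_of_isUnit X₂ (B₂ * F) h]
  simp only [Matrix.mul_sub, Matrix.sub_mul, Matrix.mul_one, Matrix.mul_assoc, add_sub_assoc]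

end RectangularMatrix

section Pencil

variable {R S n ι κ : Type*} [CommRing R] [CommRing S] [Fintype n] [DecidableEq n]
  [Fintype ι] [DecidableEq ι] [Fintype κ] [DecidableEq κ]

lemma det_smul_fromBlocks_one_sub_fromBlocks (a : Matrix ι ι R) (b : Matrix ι κ R)
    (c : Matrix κ ι R) {d : Matrix κ κ R} (hd : IsUnit d) (μ : R) :
    (μ • fromBlocks (1 : Matrix ι ι R) 0 0 (0 : Matrix κ κ R) - fromBlocks a b c d).det
      = (-d).det * (μ • (1 : Matrix ι ι R) - (a - b * d⁻¹ * c)).det := by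
  have : Invertible d := hd.invertible
  have : Invertible (-d) := invertibleNeg d
  have pencil_blocks :
      μ • fromBlocks (1 : Matrix ι ι R) 0 0 (0 : Matrix κ κ R) - fromBlocks a b c d
        = fromBlocks (μ • 1 - a) (-b) (-c) (-d) := by
    simp [fromBlocks_smul, sub_eq_add_neg, fromBlocks_neg, fromBlocks_add]
  rw [pencil_blocks, det_fromBlocks₂₂, invOf_neg, invOf_eq_nonsing_inv]
  congr 2
  simp only [Matrix.neg_mul, Matrix.mul_neg, neg_neg]
  abel

lemma associated_det_pencil_schurComplement (e : ι ⊕ κ ≃ n) (f : R →+* S) {P Q E M : Matrix n n R}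
    {a : Matrix ι ι R} {b : Matrix ι κ R} {c : Matrix κ ι R} {d : Matrix κ κ R}
    (hP : IsUnit P.det) (hQ : IsUnit Q.det) (hd : IsUnit d)
    (hE : P * E * Q = reindex e e (fromBlocks 1 0 0 0))
    (hM : P * M * Q = reindex e e (fromBlocks a b c d)) (μ : S) :
    Associated (μ • E.map f - M.map f).det
      (μ • (1 : Matrix ι ι S) - (a - b * d⁻¹ * c).map f).det := by
  have hdf : IsUnit (d.map f) := hd.map f.mapMatrix
  have pencil_reindex : P.map f * (μ • E.map f - M.map f) * Q.map f
      = reindex e e (μ • fromBlocks 1 0 0 0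
          - fromBlocks (a.map f) (b.map f) (c.map f) (d.map f)) := by
    rw [map_mul_pencil_mul_map, hE, hM]
    simp only [reindex_apply, ← submatrix_map, fromBlocks_map, Matrix.map_zero f f.map_zero,
      Matrix.map_one f f.map_zero f.map_one, submatrix_sub, submatrix_smul,
      Pi.sub_apply, Pi.smul_apply]
  have schurComplement_map : (a - b * d⁻¹ * c).map f
      = a.map f - b.map f * (d.map f)⁻¹ * c.map f := by
    rw [Matrix.map_sub f f.map_sub, Matrix.map_mul, Matrix.map_mul, map_inv_of_isUnit f hd]
  refine (associated_det_mul_mul (isUnit_det_map f hP) (isUnit_det_map f hQ) _).symm.trans ?_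
  rw [pencil_reindex, det_reindex_self, det_smul_fromBlocks_one_sub_fromBlocks _ _ _ hdf,
    ← schurComplement_map]
  exact associated_unit_mul_left _ _ ((isUnit_iff_isUnit_det _).mp hdf.neg)

end Pencil

theorem closed_loop_pencil_spectrum_general {K L n m ι κ : Type*} [CommRing K]
    [CommRing L] [IsDomain L] [Infinite L] [Fintype n] [DecidableEq n] [Fintype m]
    [Fintype ι] [DecidableEq ι] [Fintype κ] [DecidableEq κ]
    (e : ι ⊕ κ ≃ n) (f : K →+* L) {E A P X : Matrix n n K} {B : Matrix n m K}
    (F : Matrix m n K) {J : Matrix ι ι K} (hP : IsUnit P.det) (hX : IsUnit X.det)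
    (hE : P * E * X = reindex e e (fromBlocks 1 0 0 0))
    (hA : P * A * X = reindex e e (fromBlocks J 0 0 1))
    {X₁ : Matrix n ι K} (hX₁ : X₁ = X.submatrix id (e ∘ Sum.inl))
    {X₂ : Matrix n κ K} (hX₂ : X₂ = X.submatrix id (e ∘ Sum.inr))
    {B₁ : Matrix ι m K} (hB₁ : B₁ = (P * B).submatrix (e ∘ Sum.inl) id)
    {B₂ : Matrix κ m K} (hB₂ : B₂ = (P * B).submatrix (e ∘ Sum.inr) id)
    (hinv : IsUnit (1 + B₂ * F * X₂)) :
    (∀ μ : L, (μ • E.map f - (A + B * F).map f).det = 0 ↔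
        (μ • (1 : Matrix ι ι L) - (J + B₁ * F * (1 + X₂ * B₂ * F)⁻¹ * X₁).map f).det = 0) ∧
      ∃ μ : L, (μ • E.map f - (A + B * F).map f).det ≠ 0 := by
  have closedLoop_blocks : P * (A + B * F) * X = reindex e e (fromBlocks
      (J + B₁ * F * X₁) (B₁ * F * X₂) (B₂ * F * X₁) (1 + B₂ * F * X₂)) := by
    have blocks_add : fromBlocks (J + B₁ * F * X₁) (B₁ * F * X₂) (B₂ * F * X₁) (1 + B₂ * F * X₂)
        = fromBlocks J 0 0 1
          + fromBlocks (B₁ * F * X₁) (B₁ * F * X₂) (B₂ * F * X₁) (B₂ * F * X₂) := by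
      rw [fromBlocks_add, zero_add, zero_add]
    rw [Matrix.mul_add, Matrix.add_mul, hA, ← Matrix.mul_assoc P B F,
      mul_mul_eq_reindex_fromBlocks e e, ← hX₁, ← hX₂, ← hB₁, ← hB₂, blocks_add]
    simp only [reindex_apply, submatrix_add, Pi.add_apply]
  have det_eq_zero_iff (μ : L) : (μ • E.map f - (A + B * F).map f).det = 0 ↔
      (μ • (1 : Matrix ι ι L) - (J + B₁ * F * (1 + X₂ * B₂ * F)⁻¹ * X₁).map f).det = 0 := by
    rw [reduced_closedLoop_eq_schurComplement F J X₁ X₂ B₁ B₂ hinv]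
    exact (associated_det_pencil_schurComplement e f hP hX hinv hE closedLoop_blocks μ).eq_zero_iff
  refine ⟨det_eq_zero_iff, ?_⟩
  simp only [ne_eq, det_eq_zero_iff]
  exact exists_det_smul_one_sub_ne_zero _

/-- Lemma 1: for an index-1 regular pair `(E, A)` in Kronecker canonical form, the finite
spectrum of the closed-loop pencil `(E, A + BF)` coincides with the spectrum of
`J + B̄₁ Ω(F)`, where `Ω(F) = F (I + X₂ B̄₂ F)⁻¹ X₁`; in particular the closed-loop
pencil is regular. -/
theorem closed_loop_pencil_spectrum
    (n r m : ℕ) (hn : 0 < n) (hr0 : 0 < r) (hm : 0 < m) (hrn : r < n)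
    (E A : Matrix (Fin n) (Fin n) ℝ)
    (B : Matrix (Fin n) (Fin m) ℝ)
    (F : Matrix (Fin m) (Fin n) ℝ)
    (Y X : Matrix (Fin n) (Fin n) ℝ)
    (hY : IsUnit Y.det) (hX : IsUnit X.det)
    (J : Matrix (Fin r) (Fin r) ℝ)
    (hE : Yᵀ * E * X =
      Matrix.reindex (kcfEquiv n r hrn.le) (kcfEquiv n r hrn.le)
        (Matrix.fromBlocks (1 : Matrix (Fin r) (Fin r) ℝ) 0 0
          (0 : Matrix (Fin (n - r)) (Fin (n - r)) ℝ)))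
    (hA : Yᵀ * A * X =
      Matrix.reindex (kcfEquiv n r hrn.le) (kcfEquiv n r hrn.le)
        (Matrix.fromBlocks J 0 0 (1 : Matrix (Fin (n - r)) (Fin (n - r)) ℝ)))
    (X₁ : Matrix (Fin n) (Fin r) ℝ)
    (hX₁ : X₁ = X.submatrix id fun j => kcfEquiv n r hrn.le (Sum.inl j))
    (X₂ : Matrix (Fin n) (Fin (n - r)) ℝ)
    (hX₂ : X₂ = X.submatrix id fun j => kcfEquiv n r hrn.le (Sum.inr j))
    (B₁ : Matrix (Fin r) (Fin m) ℝ)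
    (hB₁ : B₁ = (Yᵀ * B).submatrix (fun i => kcfEquiv n r hrn.le (Sum.inl i)) id)
    (B₂ : Matrix (Fin (n - r)) (Fin m) ℝ)
    (hB₂ : B₂ = (Yᵀ * B).submatrix (fun i => kcfEquiv n r hrn.le (Sum.inr i)) id)
    (hinv : IsUnit (1 + B₂ * F * X₂)) :
    (∀ lam : ℂ,
        (lam • E.map (Complex.ofReal : ℝ → ℂ)
            - (A + B * F).map (Complex.ofReal : ℝ → ℂ)).det = 0
          ↔ (lam • (1 : Matrix (Fin r) (Fin r) ℂ)
              - (J + B₁ * F * (1 + X₂ * B₂ * F)⁻¹ * X₁).map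
                  (Complex.ofReal : ℝ → ℂ)).det = 0) ∧
      (∃ lam : ℂ,
        (lam • E.map (Complex.ofReal : ℝ → ℂ)
            - (A + B * F).map (Complex.ofReal : ℝ → ℂ)).det ≠ 0) := by
  exact closed_loop_pencil_spectrum_general (kcfEquiv n r hrn.le) Complex.ofRealHom F
    (by rwa [det_transpose]) hX hE hA hX₁ hX₂ hB₁ hB₂ hinv
end

section
/- Let n, r, m be positive integers with r < n. Let X₁ ∈ ℝ^{n×r}, X₂ ∈ ℝ^{n×(n−r)}, B̄₂ ∈ ℝ^{(n−r)×m}, F ∈ ℝ^{m×n}, and F̄ ∈ ℝ^{m×r}, and assume that I_n + X₂ B̄₂ F is invertible. Then F (I_n + X₂ B̄₂ F)⁻¹ X₁ = F̄ if and only if F (X₁ − X₂ B̄₂ F̄) = F̄. -/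
open Matrix

/-!
The push-through identity `F (1 + G F)⁻¹ = (1 + F G)⁻¹ F`, with `G = X₂ B̄₂`, turns `Ω(F) = F̄` into
`(1 + F G)⁻¹ F X₁ = F̄`. Clearing the inverse gives `F X₁ = F̄ + F G F̄`, that is,
`F (X₁ - G F̄) = F̄`.
-/

section PushThrough

variable {R l m n : Type*} [CommRing R] [Fintype m] [Fintype n] [DecidableEq n]

theorem isUnit_one_add_matrix_mul_comm [DecidableEq m] (A : Matrix m n R) (B : Matrix n m R) :
    IsUnit (1 + A * B) ↔ IsUnit (1 + B * A) := by
  rw [isUnit_iff_isUnit_det, isUnit_iff_isUnit_det, det_one_add_mul_comm]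

theorem matrix_mul_inv_one_add_mul [DecidableEq m] {A : Matrix m n R} {B : Matrix n m R}
    (h : IsUnit (1 + B * A)) : A * (1 + B * A)⁻¹ = (1 + A * B)⁻¹ * A := by
  have := h.invertible
  have := ((isUnit_one_add_matrix_mul_comm A B).mpr h).invertible
  have intertwine : (1 + A * B) * A = A * (1 + B * A) := by
    rw [Matrix.add_mul, Matrix.mul_add, Matrix.one_mul, Matrix.mul_one, Matrix.mul_assoc]
  rw [mul_inv_eq_iff_eq_mul_of_invertible, Matrix.mul_assoc, ← intertwine,
    inv_mul_cancel_left_of_invertible]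

theorem omega_preimage_characterization_general {F : Matrix m n R} {G : Matrix n m R}
    (h : IsUnit (1 + G * F)) (X : Matrix n l R) (Fbar : Matrix m l R) :
    F * (1 + G * F)⁻¹ * X = Fbar ↔ F * (X - G * Fbar) = Fbar := by
  classical
  have := ((isUnit_one_add_matrix_mul_comm F G).mpr h).invertible
  calc F * (1 + G * F)⁻¹ * X = Fbar
      ↔ (1 + F * G)⁻¹ * (F * X) = Fbar := by
        rw [matrix_mul_inv_one_add_mul h, Matrix.mul_assoc]
    _ ↔ F * X = (1 + F * G) * Fbar := inv_mul_eq_iff_eq_mul_of_invertible _ _ _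
    _ ↔ F * (X - G * Fbar) = Fbar := by
        rw [Matrix.add_mul, Matrix.one_mul, Matrix.mul_sub, Matrix.mul_assoc, sub_eq_iff_eq_add]

end PushThrough

/-- Preimage characterization in Lemma 1: `Ω(F) = F̄` iff `F S = F̄` with
`S = X₁ − X₂ B̄₂ F̄`. -/
theorem omega_preimage_characterization
    (n r m : ℕ) (hn : 0 < n) (hr0 : 0 < r) (hm : 0 < m) (hrn : r < n)
    (X₁ : Matrix (Fin n) (Fin r) ℝ)
    (X₂ : Matrix (Fin n) (Fin (n - r)) ℝ)
    (B₂ : Matrix (Fin (n - r)) (Fin m) ℝ)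
    (F : Matrix (Fin m) (Fin n) ℝ)
    (Fbar : Matrix (Fin m) (Fin r) ℝ)
    (h : IsUnit (1 + X₂ * B₂ * F)) :
    F * (1 + X₂ * B₂ * F)⁻¹ * X₁ = Fbar ↔ F * (X₁ - X₂ * B₂ * Fbar) = Fbar :=
  omega_preimage_characterization_general h X₁ Fbar
end
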